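/- arXiv:2403.05919 — 7 statements merged into one kernel-verified Lean document; each statement's English description precedes it below -/
import Mathlib

section
/- Let A be a commutative associative algebra over a field of characteristic zero, and let C₁, C₂ : A × A → A be bilinear maps such that (i) C₁ is antisymmetric: C₁(f,g) = -C₁(g,f) for all f,g; (ii) C₂ is symmetric: C₂(f,g) = C₂(g,f) for all f,g; (iii) the order-two associativity identity holds for all f,g,h ∈ A: C₂(f,g)·h + C₁(C₁(f,g),h) + C₂(f·g,h) = f·C₂(g,h) + C₁(f,C₁(g,h)) + C₂(f,g·h). Then C₁ satisfies the Jacobi identity: C₁(f,C₁(g,h)) + C₁(g,C₁(h,f)) + C₁(h,C₁(f,g)) = 0 for all f,g,h ∈ A. If moreover C₁ satisfies the Leibniz rule C₁(f,g·h) = C₁(f,g)·h + g·C₁(f,h), then C₁ is a Poisson bracket on A (bilinear, antisymmetric, Leibniz, Jacobi). -/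
/-!
The second-order associativity identity says that the associator of `C₁`, viewed as a product,
is the Hochschild coboundary of `C₂`. Sum this over the cyclic permutations of the three
arguments: the coboundary of a symmetric cochain cancels because the algebra is commutative, and
the associator of an antisymmetric operation adds up to minus twice the left-hand side of the
Jacobi identity.
-/

section AddCommGroup

variable {A : Type*} [AddCommGroup A]

/-- The left-hand side of the Jacobi identity for a binary operation `B`, which need not be
biadditive. -/
def jacobiator (B : A → A → A) (f g h : A) : A :=
  B f (B g h) + B g (B h f) + B h (B f g)

/-- The associator of an arbitrary binary operation `B`, not only of a ring multiplication as in
Mathlib's `associator`. -/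
def opAssociator (B : A → A → A) (f g h : A) : A :=
  B (B f g) h - B f (B g h)

theorem cyclic_sum_opAssociator_of_antisymm {B : A → A → A} (hanti : ∀ f g, B f g = -B g f)
    (f g h : A) :
    opAssociator B f g h + opAssociator B g h f + opAssociator B h f g =
      -(2 • jacobiator B f g h) := by
  simp only [opAssociator, jacobiator, hanti (B _ _)]
  abel

end AddCommGroup

/-- The Hochschild differential of a 2-cochain `C` of the algebra `A` with values in `A`. The
formula makes sense for an arbitrary map, so `C` is not required to be bilinear. -/
def hochschildCoboundary {A : Type*} [NonUnitalNonAssocRing A] (C : A → A → A) (f g h : A) : A :=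
  f * C g h - C (f * g) h + C f (g * h) - C f g * h

theorem opAssociator_eq_hochschildCoboundary_iff {A : Type*} [NonUnitalNonAssocRing A]
    {C₁ C₂ : A → A → A} {f g h : A} :
    opAssociator C₁ f g h = hochschildCoboundary C₂ f g h ↔
      C₂ f g * h + C₁ (C₁ f g) h + C₂ (f * g) h =
        f * C₂ g h + C₁ f (C₁ g h) + C₂ f (g * h) := by
  rw [← sub_eq_zero, ← sub_eq_zero (b := f * C₂ g h + _ + _), opAssociator, hochschildCoboundary]
  abel_nf

section NonUnitalNonAssocCommRing

variable {A : Type*} [NonUnitalNonAssocCommRing A]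

theorem cyclic_sum_hochschildCoboundary_of_symm {C : A → A → A} (hsymm : ∀ f g, C f g = C g f)
    (f g h : A) :
    hochschildCoboundary C f g h + hochschildCoboundary C g h f + hochschildCoboundary C h f g =
      0 := by
  simp only [hochschildCoboundary, hsymm (_ * _), mul_comm (C _ _)]
  abel

theorem first_order_term_is_poisson_bracket_general (htwo : IsSMulRegular A (2 : ℕ))
    (C₁ C₂ : A → A → A)
    (hanti : ∀ f g, C₁ f g = -C₁ g f)
    (hsymm : ∀ f g, C₂ f g = C₂ g f)
    (hassoc : ∀ f g h,
      C₂ f g * h + C₁ (C₁ f g) h + C₂ (f * g) h =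
        f * C₂ g h + C₁ f (C₁ g h) + C₂ f (g * h))
    (f g h : A) :
    C₁ f (C₁ g h) + C₁ g (C₁ h f) + C₁ h (C₁ f g) = 0 := by
  have hcoboundary (f g h : A) : opAssociator C₁ f g h = hochschildCoboundary C₂ f g h :=
    opAssociator_eq_hochschildCoboundary_iff.mpr (hassoc f g h)
  have htwice : 2 • jacobiator C₁ f g h = 0 := by
    rw [← neg_eq_zero, ← cyclic_sum_opAssociator_of_antisymm hanti]
    simp only [hcoboundary, cyclic_sum_hochschildCoboundary_of_symm hsymm]
  exact htwo.right_eq_zero_of_smul htwice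

end NonUnitalNonAssocCommRing

/-- The first-order term `C₁` of an associative deformation of a
commutative algebra `A` over a field of characteristic zero satisfies the Jacobi
identity; if moreover it satisfies the Leibniz rule, it is a Poisson bracket on `A`
(bilinear, antisymmetric, Leibniz, Jacobi). -/
theorem first_order_term_is_poisson_bracket
    {K A : Type*} [Field K] [CharZero K] [CommRing A] [Algebra K A]
    (C₁ C₂ : A →ₗ[K] A →ₗ[K] A)
    (hanti : ∀ f g : A, C₁ f g = - C₁ g f)
    (hsymm : ∀ f g : A, C₂ f g = C₂ g f)
    (hassoc : ∀ f g h : A,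
      C₂ f g * h + C₁ (C₁ f g) h + C₂ (f * g) h
        = f * C₂ g h + C₁ f (C₁ g h) + C₂ f (g * h)) :
    (∀ f g h : A, C₁ f (C₁ g h) + C₁ g (C₁ h f) + C₁ h (C₁ f g) = 0) ∧
    ((∀ f g h : A, C₁ f (g * h) = C₁ f g * h + g * C₁ f h) →
      ((∀ f g : A, C₁ f g = - C₁ g f) ∧
       (∀ f g h : A, C₁ f (g * h) = C₁ f g * h + g * C₁ f h) ∧
       (∀ f g h : A, C₁ f (C₁ g h) + C₁ g (C₁ h f) + C₁ h (C₁ f g) = 0))) := by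
  have : IsAddTorsionFree A := .of_isTorsionFree K A
  have hjacobi := first_order_term_is_poisson_bracket_general (.of_ne_zero two_ne_zero)
    (C₁ · ·) (C₂ · ·) hanti hsymm hassoc
  exact ⟨hjacobi, fun hleibniz => ⟨hanti, hleibniz, hjacobi⟩⟩
end

section
/- Let E : I → ℝ be smooth and positive on an open interval I ⊆ (0,∞), let c₁ ∈ ℝ and c₂ > 0, and set G(y) := c₂ · e^{2c₁√(E(y))} · E(y). Then for all y ∈ I: G(y)²E'(y)³ − 2E(y)²E'(y)G'(y)² + E(y)G(y)(E'(y)²G'(y) − 2E(y)G'(y)E''(y) + 2E(y)E'(y)G''(y)) = 0. Conversely, if E'(y) ≠ 0 for all y ∈ I and G : I → ℝ is smooth and positive with G²E'³ − 2E²E'G'² + EG(E'²G' − 2EG'E'' + 2EE'G'') = 0 on I, then there exist c₁ ∈ ℝ and c₂ > 0 such that G(y) = c₂ e^{2c₁√(E(y))} E(y) for all y ∈ I. -/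
/-- The numerator of the order-λ correction coefficient of `∇_Q dy` for the index pair
`(m,n) = (2,1)`:
`D = G²E'³ − 2E²E'G'² + EG(E'²G' − 2EG'E'' + 2EE'G'')`. -/
noncomputable def Dnum (E G : ℝ → ℝ) (y : ℝ) : ℝ :=
  (G y) ^ 2 * (deriv E y) ^ 3 - 2 * (E y) ^ 2 * deriv E y * (deriv G y) ^ 2
    + E y * G y * ((deriv E y) ^ 2 * deriv G y
        - 2 * E y * deriv G y * deriv (deriv E) y
        + 2 * E y * deriv E y * deriv (deriv G) y)

/-!
Substitute `E = s²` with `s = √E`, and `G = g E`. Then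
`D = 4 s⁹ g² (s' (g'/g)' - s'' (g'/g))`, so `D` vanishes exactly when the Wronskian of `s'` and
`g'/g` does. Where `s' ≠ 0` this says that `(g'/g) / s'` is constant, that is `g'/g = k s'`, whose
solutions are `g = c exp (k s)`.
-/

open Filter Topology

/-- The Wronskian of `s'` and `g'/g`, multiplied by `g²` so that it is polynomial in the derivatives
of `s` and `g`; it is the obstruction to `g` being of the form `c * exp (k * s)`. -/
noncomputable def logWronskian (s g : ℝ → ℝ) (y : ℝ) : ℝ :=
  deriv s y * (g y * deriv (deriv g) y - deriv g y ^ 2) - deriv (deriv s) y * (g y * deriv g y)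

theorem differentiableAt_deriv_of_contDiffAt_two {𝕜 F : Type*} [NontriviallyNormedField 𝕜]
    [NormedAddCommGroup F] [NormedSpace 𝕜 F] {f : 𝕜 → F} {x : 𝕜} (hf : ContDiffAt 𝕜 2 f x) :
    DifferentiableAt 𝕜 (deriv f) x :=
  (hf.derivWithin (m := 1) (by norm_num)).differentiableAt one_ne_zero

theorem eventually_differentiableAt_of_contDiffAt {𝕜 E F : Type*} [NontriviallyNormedField 𝕜]
    [NormedAddCommGroup E] [NormedSpace 𝕜 E] [NormedAddCommGroup F] [NormedSpace 𝕜 F] {f : E → F}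
    {x : E} {n : WithTop ℕ∞} (hf : ContDiffAt 𝕜 n f x) (hn : n ≠ 0) :
    ∀ᶠ z in 𝓝 x, DifferentiableAt 𝕜 f z :=
  ((hf.of_le (ENat.one_le_iff_ne_zero_withTop.mpr hn)).eventually (by simp)).mono
    fun _ hz => hz.differentiableAt one_ne_zero

theorem deriv_deriv_mul {𝕜 𝔸 : Type*} [NontriviallyNormedField 𝕜] [NormedCommRing 𝔸]
    [NormedAlgebra 𝕜 𝔸] {f g : 𝕜 → 𝔸} {x : 𝕜} (hf : ContDiffAt 𝕜 2 f x) (hg : ContDiffAt 𝕜 2 g x) :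
    deriv (deriv fun z => f z * g z) x =
      deriv (deriv f) x * g x + 2 * (deriv f x * deriv g x) + f x * deriv (deriv g) x := by
  have first : deriv (fun z => f z * g z) =ᶠ[𝓝 x] fun z => deriv f z * g z + f z * deriv g z := by
    filter_upwards [eventually_differentiableAt_of_contDiffAt hf two_ne_zero,
      eventually_differentiableAt_of_contDiffAt hg two_ne_zero] with z hfz hgz
    exact deriv_fun_mul hfz hgz
  have hf₁ := (hf.differentiableAt two_ne_zero).hasDerivAt
  have hg₁ := (hg.differentiableAt two_ne_zero).hasDerivAt
  have hf₂ := (differentiableAt_deriv_of_contDiffAt_two hf).hasDerivAt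
  have hg₂ := (differentiableAt_deriv_of_contDiffAt_two hg).hasDerivAt
  rw [first.deriv_eq, ((hf₂.fun_mul hg₁).fun_add (hf₁.fun_mul hg₂)).deriv]
  ring

section Pointwise

variable {E E₁ E₂ G G₁ G₂ s g : ℝ → ℝ} {y : ℝ}

theorem Dnum_congr (hE : E₁ =ᶠ[𝓝 y] E₂) (hG : G₁ =ᶠ[𝓝 y] G₂) : Dnum E₁ G₁ y = Dnum E₂ G₂ y := by
  simp only [Dnum, hE.eq_of_nhds, hG.eq_of_nhds, hE.deriv_eq, hG.deriv_eq, hE.deriv.deriv_eq,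
    hG.deriv.deriv_eq]

theorem Dnum_sq_mul_sq (hs : ContDiffAt ℝ 2 s y) (hg : ContDiffAt ℝ 2 g y) :
    Dnum (fun z => s z ^ 2) (fun z => g z * s z ^ 2) y = 4 * s y ^ 9 * logWronskian s g y := by
  have hs₁ := hs.differentiableAt two_ne_zero
  have hg₁ := hg.differentiableAt two_ne_zero
  have hss : ContDiffAt ℝ 2 (fun z => s z * s z) y := hs.mul hs
  simp only [Dnum, logWronskian, pow_two (s _), deriv_deriv_mul hg hss, deriv_deriv_mul hs hs,
    deriv_fun_mul hg₁ (hs₁.fun_mul hs₁), deriv_fun_mul hs₁ hs₁]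
  ring

theorem Dnum_mul_self (hE : ContDiffAt ℝ 2 E y) (hEy : 0 < E y) (hg : ContDiffAt ℝ 2 g y) :
    Dnum E (fun z => g z * E z) y =
      4 * √(E y) ^ 9 * logWronskian (fun z => √(E z)) g y := by
  have sq_sqrt_E : E =ᶠ[𝓝 y] fun z => √(E z) ^ 2 := by
    filter_upwards [hE.continuousAt.eventually_const_lt hEy] with z hz
    exact (Real.sq_sqrt hz.le).symm
  rw [Dnum_congr sq_sqrt_E (sq_sqrt_E.mono fun z hz => congrArg (g z * ·) hz)]
  exact Dnum_sq_mul_sq (hE.sqrt hEy.ne') hg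

theorem logWronskian_const_mul_exp (hs : ContDiffAt ℝ 2 s y) (c k : ℝ) :
    logWronskian s (fun z => c * Real.exp (k * s z)) y = 0 := by
  set g : ℝ → ℝ := fun z => c * Real.exp (k * s z) with hg_def
  have hasDerivAt_g {z : ℝ} (hz : DifferentiableAt ℝ s z) :
      HasDerivAt g (k * (g z * deriv s z)) z :=
    ((hz.hasDerivAt.const_mul k).exp.const_mul c).congr_deriv (by simp only [hg_def]; ring)
  have first : deriv g =ᶠ[𝓝 y] fun z => k * (g z * deriv s z) :=
    (eventually_differentiableAt_of_contDiffAt hs two_ne_zero).mono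
      fun z hz => (hasDerivAt_g hz).deriv
  have hs₂ := (differentiableAt_deriv_of_contDiffAt_two hs).hasDerivAt
  have second := (((hasDerivAt_g (hs.differentiableAt two_ne_zero)).fun_mul hs₂).const_mul k).deriv
  rw [logWronskian, first.deriv_eq, second, first.eq_of_nhds]
  ring

theorem Dnum_const_mul_exp_sqrt_mul_self (hE : ContDiffAt ℝ 2 E y) (hEy : 0 < E y)
    (c k : ℝ) : Dnum E (fun z => c * Real.exp (k * √(E z)) * E z) y = 0 := by
  have hs : ContDiffAt ℝ 2 (fun z => √(E z)) y := hE.sqrt hEy.ne'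
  rw [Dnum_mul_self hE hEy (contDiffAt_const.mul (contDiffAt_const.mul hs).exp),
    logWronskian_const_mul_exp hs, mul_zero]

theorem logWronskian_sqrt_div_eq_zero (hE : ContDiffAt ℝ 2 E y) (hEy : 0 < E y)
    (hG : ContDiffAt ℝ 2 G y) (hD : Dnum E G y = 0) :
    logWronskian (fun z => √(E z)) (G / E) y = 0 := by
  have div_mul_E : (fun z => (G / E) z * E z) =ᶠ[𝓝 y] G := by
    filter_upwards [hE.continuousAt.eventually_ne hEy.ne'] with z hz
    exact div_mul_cancel₀ _ hz
  rw [← Dnum_congr .rfl div_mul_E, Dnum_mul_self hE hEy (hG.div hE hEy.ne')] at hD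
  have : 4 * √(E y) ^ 9 ≠ 0 := by positivity
  exact (mul_eq_zero.mp hD).resolve_left this

theorem hasDerivAt_logDeriv_div_deriv (hs : ContDiffAt ℝ 2 s y) (hg : ContDiffAt ℝ 2 g y)
    (hs' : deriv s y ≠ 0) (hgy : g y ≠ 0) :
    HasDerivAt (fun z => logDeriv g z / deriv s z)
      (logWronskian s g y / (g y * deriv s y) ^ 2) y := by
  have hs₂ := (differentiableAt_deriv_of_contDiffAt_two hs).hasDerivAt
  have hg₁ := (hg.differentiableAt two_ne_zero).hasDerivAt
  have hg₂ := (differentiableAt_deriv_of_contDiffAt_two hg).hasDerivAt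
  refine ((hg₂.div hg₁ hgy).div hs₂ hs').congr_deriv ?_
  simp only [logWronskian, Pi.div_apply]
  field_simp

end Pointwise

section Interval

variable {I : Set ℝ} {E G s g : ℝ → ℝ}

theorem exists_logDeriv_eq_const_mul_deriv (hIopen : IsOpen I) (hIconn : IsPreconnected I)
    (hs : ContDiffOn ℝ 2 s I) (hg : ContDiffOn ℝ 2 g I) (hs' : ∀ y ∈ I, deriv s y ≠ 0)
    (hg₀ : ∀ y ∈ I, g y ≠ 0) (hW : ∀ y ∈ I, logWronskian s g y = 0) :
    ∃ k, ∀ y ∈ I, logDeriv g y = k * deriv s y := by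
  have hasDerivAt_ratio (y : ℝ) (hy : y ∈ I) :
      HasDerivAt (fun z => logDeriv g z / deriv s z) 0 y :=
    (hasDerivAt_logDeriv_div_deriv (hs.contDiffAt (hIopen.mem_nhds hy))
      (hg.contDiffAt (hIopen.mem_nhds hy)) (hs' y hy) (hg₀ y hy)).congr_deriv (by simp [hW y hy])
  obtain ⟨k, hk⟩ := hIopen.exists_is_const_of_deriv_eq_zero hIconn
    (fun y hy => (hasDerivAt_ratio y hy).differentiableAt.differentiableWithinAt)
    (fun y hy => (hasDerivAt_ratio y hy).deriv)
  exact ⟨k, fun y hy => (div_eq_iff (hs' y hy)).mp (hk y hy)⟩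

theorem exists_eq_const_mul_exp_of_logDeriv_eq (hIopen : IsOpen I) (hIconn : IsPreconnected I)
    (hs : DifferentiableOn ℝ s I) (hg : DifferentiableOn ℝ g I) (hg₀ : ∀ y ∈ I, g y ≠ 0) {k : ℝ}
    (hk : ∀ y ∈ I, logDeriv g y = k * deriv s y) :
    ∃ c, ∀ y ∈ I, g y = c * Real.exp (k * s y) := by
  have logDeriv_exp : Set.EqOn (logDeriv g) (logDeriv fun z => Real.exp (k * s z)) I := by
    intro y hy
    have hsy := ((hs.differentiableAt (hIopen.mem_nhds hy)).hasDerivAt.const_mul k).exp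
    rw [hk y hy, logDeriv_apply, hsy.deriv, mul_div_cancel_left₀ _ (Real.exp_ne_zero _)]
  obtain ⟨c, -, hc⟩ := (logDeriv_eqOn_iff hg (hs.const_mul k).exp hIopen hIconn
    (fun y _ => Real.exp_ne_zero _) hg₀).mp logDeriv_exp
  exact ⟨c, hc⟩

theorem exists_eq_const_mul_exp_sqrt_mul_self (hIopen : IsOpen I) (hIconn : IsPreconnected I)
    (hE : ContDiffOn ℝ 2 E I) (hE₀ : ∀ y ∈ I, 0 < E y) (hE' : ∀ y ∈ I, deriv E y ≠ 0)
    (hG : ContDiffOn ℝ 2 G I) (hG₀ : ∀ y ∈ I, G y ≠ 0) (hD : ∀ y ∈ I, Dnum E G y = 0) :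
    ∃ k c, ∀ y ∈ I, G y = c * Real.exp (k * √(E y)) * E y := by
  have hE_ne (y : ℝ) (hy : y ∈ I) : E y ≠ 0 := (hE₀ y hy).ne'
  have hs : ContDiffOn ℝ 2 (fun z => √(E z)) I := hE.sqrt hE_ne
  have hg : ContDiffOn ℝ 2 (G / E) I := hG.div hE hE_ne
  have hg₀ (y : ℝ) (hy : y ∈ I) : (G / E) y ≠ 0 := div_ne_zero (hG₀ y hy) (hE_ne y hy)
  have hs' (y : ℝ) (hy : y ∈ I) : deriv (fun z => √(E z)) y ≠ 0 := by
    have hEy := (hE.contDiffAt (hIopen.mem_nhds hy)).differentiableAt two_ne_zero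
    have := Real.sqrt_ne_zero'.mpr (hE₀ y hy)
    rw [deriv_sqrt hEy (hE_ne y hy)]
    exact div_ne_zero (hE' y hy) (by positivity)
  obtain ⟨k, hk⟩ := exists_logDeriv_eq_const_mul_deriv hIopen hIconn hs hg hs' hg₀ fun y hy =>
    logWronskian_sqrt_div_eq_zero (hE.contDiffAt (hIopen.mem_nhds hy)) (hE₀ y hy)
      (hG.contDiffAt (hIopen.mem_nhds hy)) (hD y hy)
  obtain ⟨c, hc⟩ := exists_eq_const_mul_exp_of_logDeriv_eq hIopen hIconn
    (hs.differentiableOn two_ne_zero) (hg.differentiableOn two_ne_zero) hg₀ hk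
  exact ⟨k, c, fun y hy => (div_eq_iff (hE_ne y hy)).mp (hc y hy)⟩

end Interval

theorem Dnum_vanishes_iff_exponential_family_general {I : Set ℝ} (hIopen : IsOpen I)
    (hIconn : IsPreconnected I) {E : ℝ → ℝ} (hE : ContDiffOn ℝ 2 E I) (hE₀ : ∀ y ∈ I, 0 < E y) :
    (∀ c₁ c₂ : ℝ, ∀ y ∈ I, Dnum E (fun z => c₂ * Real.exp (2 * c₁ * √(E z)) * E z) y = 0) ∧
    (∀ G : ℝ → ℝ, ContDiffOn ℝ 2 G I → (∀ y ∈ I, G y ≠ 0) →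
      (∀ y ∈ I, deriv E y ≠ 0) → (∀ y ∈ I, Dnum E G y = 0) →
      ∃ c₁ c₂ : ℝ, ∀ y ∈ I, G y = c₂ * Real.exp (2 * c₁ * √(E y)) * E y) := by
  refine ⟨fun c₁ c₂ y hy => Dnum_const_mul_exp_sqrt_mul_self (hE.contDiffAt (hIopen.mem_nhds hy))
    (hE₀ y hy) c₂ (2 * c₁), fun G hG hG₀ hE' hD => ?_⟩
  obtain ⟨k, c, h⟩ := exists_eq_const_mul_exp_sqrt_mul_self hIopen hIconn hE hE₀ hE' hG hG₀ hD
  exact ⟨k / 2, c, by simpa only [mul_div_cancel₀ k (two_ne_zero' ℝ)] using h⟩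

/-- If `G(y) = c₂ e^{2c₁√(E(y))} E(y)` (with `c₂ > 0`), then `D = 0` on
the open interval `I ⊆ (0,∞)`.  Conversely, if `E' ≠ 0` on `I` and `G` is smooth, positive
and satisfies `D = 0` on `I`, then `G(y) = c₂ e^{2c₁√(E(y))} E(y)` on `I` for some
constants `c₁ ∈ ℝ` and `c₂ > 0`. -/
theorem Dnum_vanishes_iff_exponential_family (I : Set ℝ)
    (hIopen : IsOpen I) (hIinterval : I.OrdConnected) (hIsub : I ⊆ Set.Ioi 0)
    (hIne : I.Nonempty)
    (E : ℝ → ℝ) (hE : ContDiffOn ℝ (⊤ : ℕ∞) E I) (hEpos : ∀ y ∈ I, 0 < E y) :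
    (∀ c₁ : ℝ, ∀ c₂ : ℝ, 0 < c₂ →
      ∀ y ∈ I, Dnum E (fun z => c₂ * Real.exp (2 * c₁ * Real.sqrt (E z)) * E z) y = 0) ∧
    (∀ G : ℝ → ℝ, ContDiffOn ℝ (⊤ : ℕ∞) G I → (∀ y ∈ I, 0 < G y) →
      (∀ y ∈ I, deriv E y ≠ 0) → (∀ y ∈ I, Dnum E G y = 0) →
      ∃ c₁ c₂ : ℝ, 0 < c₂ ∧
        ∀ y ∈ I, G y = c₂ * Real.exp (2 * c₁ * Real.sqrt (E y)) * E y) := by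
  obtain ⟨vanishes, classifies⟩ := Dnum_vanishes_iff_exponential_family_general hIopen
    hIinterval.isPreconnected (contDiffOn_infty.mp hE 2) hEpos
  refine ⟨fun c₁ c₂ _ => vanishes c₁ c₂, fun G hG hGpos hE' hD => ?_⟩
  obtain ⟨c₁, c₂, hG_eq⟩ :=
    classifies G (contDiffOn_infty.mp hG 2) (fun y hy => (hGpos y hy).ne') hE' hD
  obtain ⟨y, hy⟩ := hIne
  have hG_y : 0 < c₂ * Real.exp (2 * c₁ * √(E y)) * E y := hG_eq y hy ▸ hGpos y hy
  have c₂_pos : 0 < c₂ := by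
    rwa [mul_pos_iff_of_pos_right (hEpos y hy), mul_pos_iff_of_pos_right (Real.exp_pos _)] at hG_y
  exact ⟨c₁, c₂, c₂_pos, hG_eq⟩
end

section
/- (Main result 2, first part.) Let A > 0 be a constant and E : (0,∞) → ℝ smooth and positive, and consider the metric g = E(y)dx⊗dx + A·E(y)dy⊗dy on the upper half-plane, with Christoffel symbols Γ¹₁₂ = Γ¹₂₁ = Γ²₂₂ = E'/(2E), Γ²₁₁ = −E'/(2A·E), curvature components R¹₂₁₂ = −[(Γ¹₁₂)' + Γ¹₁₂Γ¹₂₁ − Γ²₂₂Γ¹₁₂] and R²₁₂₁ = (Γ²₁₁)' − Γ¹₁₂Γ²₁₁ + Γ²₁₁Γ²₂₂, and Poisson component ω¹²(y) = 1/E(y). Then the coefficient of the generalized Ricci form, 𝓡(y) := −½ ω¹²(y)·(E(y)·R¹₂₁₂(y) + A·E(y)·R²₁₂₁(y)), equals (E(y)E''(y) − E'(y)²)/(2E(y)²), i.e. 𝓡(y) = ½ (d²/dy²)(log E(y)) for all y > 0. -/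
/-!
For a metric `E(y) dx² + G(y) dy²` with `G = A * E`, every Christoffel symbol is a constant
multiple of the logarithmic derivative `E' / E`. The quadratic terms of the curvature then cancel,
and both `E * R¹₂₁₂` and `G * R²₁₂₁` equal `-(1 / 2) * E * (E' / E)'`.
-/

open Filter Topology

theorem deriv_logDeriv {𝕜 : Type*} [NontriviallyNormedField 𝕜] {f : 𝕜 → 𝕜} {x : 𝕜}
    (hf : DifferentiableAt 𝕜 f x) (hf' : DifferentiableAt 𝕜 (deriv f) x) (hx : f x ≠ 0) :
    deriv (logDeriv f) x = (f x * deriv (deriv f) x - deriv f x ^ 2) / f x ^ 2 := by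
  rw [logDeriv, deriv_div hf' hf hx]
  ring

theorem deriv_deriv_log_comp {f : ℝ → ℝ} {x : ℝ} (hf : ∀ᶠ z in 𝓝 x, DifferentiableAt ℝ f z)
    (hx : f x ≠ 0) :
    deriv (deriv fun z => Real.log (f z)) x = deriv (logDeriv f) x := by
  have hne : ∀ᶠ z in 𝓝 x, f z ≠ 0 := hf.self_of_nhds.continuousAt.eventually_ne hx
  have hlog : deriv (fun z => Real.log (f z)) =ᶠ[𝓝 x] logDeriv f := by
    filter_upwards [hf, hne] with z hdiff hz
    exact Real.deriv_log_comp_eq_logDeriv hdiff hz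
  exact hlog.deriv_eq

/-- The Christoffel symbol `Γ¹₁₂ = Γ¹₂₁` of the metric `E(y) dx² + G(y) dy²`; it does not
depend on `G`. -/
noncomputable def christoffel₁₁₂ (E : ℝ → ℝ) (y : ℝ) : ℝ :=
  deriv E y / (2 * E y)

/-- The Christoffel symbol `Γ²₁₁` of the metric `E(y) dx² + G(y) dy²`. -/
noncomputable def christoffel₂₁₁ (E G : ℝ → ℝ) (y : ℝ) : ℝ :=
  -deriv E y / (2 * G y)

/-- The Christoffel symbol `Γ²₂₂` of the metric `E(y) dx² + G(y) dy²`; it does not depend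
on `E`. -/
noncomputable def christoffel₂₂₂ (G : ℝ → ℝ) (y : ℝ) : ℝ :=
  deriv G y / (2 * G y)

/-- The component `R¹₂₁₂` of the Riemann tensor of `E(y) dx² + G(y) dy²`, in the convention
`R^i_{jkl} = ∂_k Γ^i_{lj} - ∂_l Γ^i_{kj} + Γ^m_{lj} Γ^i_{km} - Γ^m_{kj} Γ^i_{lm}`. -/
noncomputable def riemann₁₂₁₂ (E G : ℝ → ℝ) (y : ℝ) : ℝ :=
  -(deriv (christoffel₁₁₂ E) y + christoffel₁₁₂ E y * christoffel₁₁₂ E y -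
    christoffel₂₂₂ G y * christoffel₁₁₂ E y)

/-- The component `R²₁₂₁` of the Riemann tensor of `E(y) dx² + G(y) dy²`, in the same
convention as `riemann₁₂₁₂`. -/
noncomputable def riemann₂₁₂₁ (E G : ℝ → ℝ) (y : ℝ) : ℝ :=
  deriv (christoffel₂₁₁ E G) y - christoffel₁₁₂ E y * christoffel₂₁₁ E G y +
    christoffel₂₁₁ E G y * christoffel₂₂₂ G y

/-- The coefficient against `dx ∧ dy` of the generalized Ricci form `H^{ij} g_{ij}` of
`E(y) dx² + G(y) dy²`, where `H^{ij} = -(1 / 2) ω^{is} R^j_{nms} dx^m ∧ dx^n` and the Poisson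
tensor has component `ω¹² = ω`. -/
noncomputable def generalizedRicciCoeff (ω E G : ℝ → ℝ) (y : ℝ) : ℝ :=
  -(1 / 2) * ω y * (E y * riemann₁₂₁₂ E G y + G y * riemann₂₁₂₁ E G y)

theorem christoffel₁₁₂_eq_logDeriv (E : ℝ → ℝ) :
    christoffel₁₁₂ E = fun y => 1 / 2 * logDeriv E y := by
  funext y
  rw [christoffel₁₁₂, logDeriv_apply]
  ring

theorem christoffel₂₁₁_const_mul (A : ℝ) (E : ℝ → ℝ) :
    christoffel₂₁₁ E (fun y => A * E y) = fun y => -(1 / (2 * A)) * logDeriv E y := by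
  funext y
  rw [christoffel₂₁₁, logDeriv_apply]
  ring

theorem christoffel₂₂₂_const_mul {A : ℝ} (hA : A ≠ 0) (E : ℝ → ℝ) :
    christoffel₂₂₂ (fun y => A * E y) = christoffel₁₁₂ E := by
  funext y
  rw [christoffel₂₂₂, christoffel₁₁₂, deriv_const_mul_field, mul_left_comm,
    mul_div_mul_left _ _ hA]

theorem riemann₁₂₁₂_const_mul {A : ℝ} (hA : A ≠ 0) (E : ℝ → ℝ) (y : ℝ) :
    riemann₁₂₁₂ E (fun y => A * E y) y = -(1 / 2) * deriv (logDeriv E) y := by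
  have hderiv : deriv (christoffel₁₁₂ E) y = 1 / 2 * deriv (logDeriv E) y := by
    rw [christoffel₁₁₂_eq_logDeriv, deriv_const_mul_field]
  rw [riemann₁₂₁₂, christoffel₂₂₂_const_mul hA, hderiv]
  ring

theorem riemann₂₁₂₁_const_mul {A : ℝ} (hA : A ≠ 0) (E : ℝ → ℝ) (y : ℝ) :
    riemann₂₁₂₁ E (fun y => A * E y) y = -(1 / (2 * A)) * deriv (logDeriv E) y := by
  have hderiv : deriv (christoffel₂₁₁ E fun y => A * E y) y =
      -(1 / (2 * A)) * deriv (logDeriv E) y := by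
    rw [christoffel₂₁₁_const_mul, deriv_const_mul_field]
  rw [riemann₂₁₂₁, christoffel₂₂₂_const_mul hA, hderiv]
  ring

theorem generalizedRicciCoeff_const_mul {A : ℝ} (hA : A ≠ 0) (ω E : ℝ → ℝ) (y : ℝ) :
    generalizedRicciCoeff ω E (fun y => A * E y) y =
      1 / 2 * (ω y * E y) * deriv (logDeriv E) y := by
  rw [generalizedRicciCoeff, riemann₁₂₁₂_const_mul hA, riemann₂₁₂₁_const_mul hA]
  field_simp
  ring

theorem generalized_ricci_form_of_conformal_metric_general {A : ℝ} (hA : A ≠ 0)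
    {E : ℝ → ℝ} {y : ℝ} (hE : ∀ᶠ z in 𝓝 y, DifferentiableAt ℝ E z)
    (hE' : DifferentiableAt ℝ (deriv E) y) (hy : E y ≠ 0) :
    generalizedRicciCoeff (fun z => 1 / E z) E (fun z => A * E z) y =
        (E y * deriv (deriv E) y - deriv E y ^ 2) / (2 * E y ^ 2) ∧
      generalizedRicciCoeff (fun z => 1 / E z) E (fun z => A * E z) y =
        1 / 2 * deriv (deriv fun z => Real.log (E z)) y := by
  have hRic : generalizedRicciCoeff (fun z => 1 / E z) E (fun z => A * E z) y =
      1 / 2 * deriv (logDeriv E) y := by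
    rw [generalizedRicciCoeff_const_mul hA, one_div_mul_cancel hy, mul_one]
  constructor
  · rw [hRic, deriv_logDeriv hE.self_of_nhds hE' hy, div_mul_div_comm, one_mul]
  · rw [hRic, deriv_deriv_log_comp hE hy]

/-- **Main result 2, first part.** For the metric
`g = E(y)dx⊗dx + A·E(y)dy⊗dy` on the upper half-plane (`A > 0` constant, `E` smooth
positive), with Christoffel symbols `Γ¹₁₂ = Γ¹₂₁ = Γ²₂₂ = E'/(2E)`, `Γ²₁₁ = −E'/(2AE)`,
curvature components `R¹₂₁₂ = −[(Γ¹₁₂)' + Γ¹₁₂Γ¹₂₁ − Γ²₂₂Γ¹₁₂]`,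
`R²₁₂₁ = (Γ²₁₁)' − Γ¹₁₂Γ²₁₁ + Γ²₁₁Γ²₂₂`, and Poisson component `ω¹² = 1/E`, the
generalized Ricci coefficient `𝓡 = −½ω¹²(E·R¹₂₁₂ + A·E·R²₁₂₁)` equals
`(EE'' − E'²)/(2E²)`, i.e. `𝓡 = ½(log E)''`. -/
theorem generalized_ricci_form_of_conformal_metric (A : ℝ) (hA : 0 < A)
    (E : ℝ → ℝ) (hE : ContDiffOn ℝ (⊤ : ℕ∞) E (Set.Ioi 0))
    (hEpos : ∀ y : ℝ, 0 < y → 0 < E y) :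
    let Γ112 : ℝ → ℝ := fun y => deriv E y / (2 * E y)
    let Γ121 : ℝ → ℝ := fun y => deriv E y / (2 * E y)
    let Γ222 : ℝ → ℝ := fun y => deriv E y / (2 * E y)
    let Γ211 : ℝ → ℝ := fun y => -deriv E y / (2 * (A * E y))
    let R1212 : ℝ → ℝ := fun y =>
      -(deriv Γ112 y + Γ112 y * Γ121 y - Γ222 y * Γ112 y)
    let R2121 : ℝ → ℝ := fun y =>
      deriv Γ211 y - Γ112 y * Γ211 y + Γ211 y * Γ222 y
    let ω : ℝ → ℝ := fun y => 1 / E y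
    let Ric : ℝ → ℝ := fun y =>
      -(1 / 2) * ω y * (E y * R1212 y + A * E y * R2121 y)
    ∀ y : ℝ, 0 < y →
      Ric y = (E y * deriv (deriv E) y - (deriv E y) ^ 2) / (2 * (E y) ^ 2) ∧
      Ric y = (1 / 2) * deriv (deriv (fun z => Real.log (E z))) y := by
  intro Γ112 Γ121 Γ222 Γ211 R1212 R2121 ω Ric y hy
  obtain ⟨hE_diff, hE'_smooth⟩ := (contDiffOn_infty_iff_deriv_of_isOpen isOpen_Ioi).1 hE
  have hy_nhds : Set.Ioi 0 ∈ 𝓝 y := Ioi_mem_nhds hy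
  have hE'_diff : DifferentiableAt ℝ (deriv E) y :=
    (hE'_smooth.contDiffAt hy_nhds).differentiableAt (by simp)
  have hRic : Ric y = generalizedRicciCoeff ω E (fun z => A * E z) y := by
    rw [generalizedRicciCoeff, riemann₁₂₁₂, riemann₂₁₂₁, christoffel₂₂₂_const_mul hA.ne']
    rfl
  rw [hRic]
  exact generalized_ricci_form_of_conformal_metric_general hA.ne'
    (hE_diff.eventually_differentiableAt hy_nhds) hE'_diff (hEpos y hy).ne'
end

section
/- (Main result 2, solution families.) Let α ∈ ℝ, c₂ > 0 and y₀ ∈ ℝ. Then each of the following positive functions E satisfies the ODE (log E)''(y) − ½((log E)'(y))² = 2α on its domain of definition: (i) if α > 0, E(y) = c₂ / cos²(√α·(y − y₀)) on any open interval where cos(√α·(y − y₀)) ≠ 0; (ii) if α = 0, E(y) = c₂ / (y − y₀)² on any open interval not containing y₀; (iii) if α < 0, E(y) = c₂ / cosh²(√(−α)·(y − y₀)) on all of ℝ. In particular, the Poincaré-type function E(y) = y^{-2} (case α = 0, y₀ = 0, c₂ = 1) satisfies the ODE with α = 0. -/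
/-- The left-hand side of the ODE `(log E)'' − ½((log E)')² = 2α`. -/
noncomputable def Pode (E : ℝ → ℝ) (y : ℝ) : ℝ :=
  deriv (deriv (fun z => Real.log (E z))) y
    - (1 / 2) * (deriv (fun z => Real.log (E z)) y) ^ 2

/-!
Write `E = c / Y²`. Then `u = (log E)'` equals `-2 Y' / Y`, and the quadratic terms in
`u' - u² / 2` cancel, leaving `-2 Y'' / Y`. The nonlinear equation for `E` is thus the linear
equation `Y'' = -α Y`, which is solved by `cos (√α (y - y₀))`, `y - y₀` and
`cosh (√(-α) (y - y₀))` according to the sign of `α`.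
-/

open scoped Topology

section LogDeriv

variable {𝕜 𝕜' : Type*} [NontriviallyNormedField 𝕜] [NontriviallyNormedField 𝕜']
  [NormedAlgebra 𝕜 𝕜'] {Y : 𝕜 → 𝕜'} {y : 𝕜}

theorem logDeriv_const_div_pow {c : 𝕜'} (hc : c ≠ 0) (hY : DifferentiableAt 𝕜 Y y) (n : ℕ) :
    logDeriv (fun z => c / Y z ^ n) y = -n * logDeriv Y y := by
  simp_rw [div_eq_mul_inv, ← zpow_natCast, ← zpow_neg]
  rw [logDeriv_const_mul y c hc, logDeriv_fun_zpow hY, Int.cast_neg, Int.cast_natCast]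

theorem hasDerivAt_logDeriv {Y' : 𝕜 → 𝕜'} {Y'' : 𝕜'} (hY : ∀ᶠ z in 𝓝 y, HasDerivAt Y (Y' z) z)
    (hY' : HasDerivAt Y' Y'' y) (hy : Y y ≠ 0) :
    HasDerivAt (logDeriv Y) (Y'' / Y y - logDeriv Y y ^ 2) y := by
  have hlog : logDeriv Y =ᶠ[𝓝 y] fun z => Y' z / Y z :=
    hY.mono fun z hz => by rw [logDeriv_apply, hz.deriv]
  refine ((hY'.fun_div hY.self_of_nhds hy).congr_of_eventuallyEq hlog).congr_deriv ?_
  rw [hlog.eq_of_nhds]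
  field_simp

end LogDeriv

-- For `c < 0` this rests on the convention `Real.log x = Real.log |x|`.
theorem pode_const_div_sq {c : ℝ} {Y Y' : ℝ → ℝ} {Y'' y : ℝ} (hc : c ≠ 0)
    (hY : ∀ᶠ z in 𝓝 y, HasDerivAt Y (Y' z) z) (hY' : HasDerivAt Y' Y'' y) (hy : Y y ≠ 0) :
    Pode (fun z => c / Y z ^ 2) y = -2 * (Y'' / Y y) := by
  have hlog : deriv (fun z => Real.log (c / Y z ^ 2)) =ᶠ[𝓝 y] fun z => -2 * logDeriv Y z := by
    filter_upwards [hY, hY.self_of_nhds.continuousAt.eventually_ne hy] with z hYz hz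
    have hE : DifferentiableAt ℝ (fun z => c / Y z ^ 2) z :=
      (differentiableAt_const c).fun_div (hYz.differentiableAt.fun_pow 2) (pow_ne_zero 2 hz)
    calc deriv (fun z => Real.log (c / Y z ^ 2)) z
      _ = logDeriv (fun z => c / Y z ^ 2) z :=
        Real.deriv_log_comp_eq_logDeriv hE (div_ne_zero hc (pow_ne_zero 2 hz))
      _ = -2 * logDeriv Y z := logDeriv_const_div_pow hc hYz.differentiableAt 2
  have hlog' : deriv (fun z => -2 * logDeriv Y z) y = -2 * (Y'' / Y y - logDeriv Y y ^ 2) :=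
    ((hasDerivAt_logDeriv hY hY' hy).const_mul (-2)).deriv
  rw [Pode, hlog.deriv_eq, hlog.eq_of_nhds, hlog']
  ring

theorem pode_const_div_cos_sq {c ω y₀ y : ℝ} (hc : c ≠ 0)
    (hy : Real.cos (ω * (y - y₀)) ≠ 0) :
    Pode (fun z => c / Real.cos (ω * (z - y₀)) ^ 2) y = 2 * ω ^ 2 := by
  have hlin (z : ℝ) : HasDerivAt (fun z => ω * (z - y₀)) ω z :=
    (hasDerivAt_const_mul ω).comp_sub_const z y₀
  rw [pode_const_div_sq hc (.of_forall fun z => (hlin z).cos)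
    ((hlin y).sin.fun_neg.mul_const ω) hy]
  field_simp

theorem pode_const_div_sub_sq {c y₀ y : ℝ} (hc : c ≠ 0) (hy : y ≠ y₀) :
    Pode (fun z => c / (z - y₀) ^ 2) y = 0 := by
  rw [pode_const_div_sq hc (.of_forall fun z => (hasDerivAt_id' z).sub_const y₀)
    (hasDerivAt_const y 1) (sub_ne_zero.mpr hy), zero_div, mul_zero]

theorem pode_const_div_cosh_sq {c : ℝ} (hc : c ≠ 0) (ω y₀ y : ℝ) :
    Pode (fun z => c / Real.cosh (ω * (z - y₀)) ^ 2) y = -2 * ω ^ 2 := by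
  have hlin (z : ℝ) : HasDerivAt (fun z => ω * (z - y₀)) ω z :=
    (hasDerivAt_const_mul ω).comp_sub_const z y₀
  have hcosh : Real.cosh (ω * (y - y₀)) ≠ 0 := (Real.cosh_pos _).ne'
  rw [pode_const_div_sq hc (.of_forall fun z => (hlin z).cosh) ((hlin y).sinh.mul_const ω) hcosh]
  field_simp

/-- **Main result 2, solution families.** Each of the following positive
functions satisfies `(log E)'' − ½((log E)')² = 2α` on its domain:
(i) for `α > 0`, `E(y) = c₂/cos²(√α(y−y₀))` wherever `cos(√α(y−y₀)) ≠ 0`;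
(ii) for `α = 0`, `E(y) = c₂/(y−y₀)²` away from `y₀`;
(iii) for `α < 0`, `E(y) = c₂/cosh²(√(−α)(y−y₀))` on all of `ℝ`.
In particular the Poincaré-type function `E(y) = 1/y²` satisfies the ODE with `α = 0`. -/
theorem solution_families_of_quantum_levi_civita_ode (α c₂ y₀ : ℝ) (hc₂ : 0 < c₂) :
    (0 < α → ∀ y : ℝ, Real.cos (Real.sqrt α * (y - y₀)) ≠ 0 →
      Pode (fun z => c₂ / Real.cos (Real.sqrt α * (z - y₀)) ^ 2) y = 2 * α) ∧
    (α = 0 → ∀ y : ℝ, y ≠ y₀ →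
      Pode (fun z => c₂ / (z - y₀) ^ 2) y = 2 * α) ∧
    (α < 0 → ∀ y : ℝ,
      Pode (fun z => c₂ / Real.cosh (Real.sqrt (-α) * (z - y₀)) ^ 2) y = 2 * α) ∧
    (∀ y : ℝ, y ≠ 0 → Pode (fun z => 1 / z ^ 2) y = 0) := by
  refine ⟨fun hα y hy => ?_, fun hα y hy => ?_, fun hα y => ?_, fun y hy => ?_⟩
  · rw [pode_const_div_cos_sq hc₂.ne' hy, Real.sq_sqrt hα.le]
  · rw [pode_const_div_sub_sq hc₂.ne' hy, hα, mul_zero]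
  · rw [pode_const_div_cosh_sq hc₂.ne', Real.sq_sqrt (neg_pos.mpr hα).le, neg_mul_neg]
  · simpa only [sub_zero] using pode_const_div_sub_sq one_ne_zero hy
end

section
/- Let I ⊆ ℝ be a nonempty open interval and E : I → ℝ smooth with E(y) > 0 on I. Then E satisfies (log E)''(y) = ½((log E)'(y))² for all y ∈ I (the case α = 0) if and only if there exist constants a, b ∈ ℝ such that a + b·y > 0 for all y ∈ I and E(y) = (a + b·y)^{-2} on I. -/
/-!
Put `Y = E ^ (-1/2) = exp (-(1/2) log E)`. Differentiating twice gives
`Y'' = -(1/2) ((log E)'' - (1/2) ((log E)') ^ 2) Y`, and `Y` never vanishes, so the equation for `E`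
is the linear equation `Y'' = 0`, whose solutions on an interval are affine.
-/

open Set Topology

theorem deriv_deriv_eq_zero_iff_exists_eq_add_smul {𝕜 F : Type*} [RCLike 𝕜]
    [NormedAddCommGroup F] [NormedSpace 𝕜 F] {f : 𝕜 → F} {s : Set 𝕜} (hs : IsOpen s)
    (hs' : IsPreconnected s) (hf : DifferentiableOn 𝕜 f s)
    (hf' : DifferentiableOn 𝕜 (deriv f) s) :
    (∀ x ∈ s, deriv (deriv f) x = 0) ↔ ∃ a b : F, ∀ x ∈ s, f x = a + x • b := by
  have deriv_smul_right (b : F) (x : 𝕜) : deriv (fun z : 𝕜 => z • b) x = b := by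
    simpa using ((hasDerivAt_id x).smul_const b).deriv
  constructor
  · intro h
    obtain ⟨b, hb⟩ := hs.exists_is_const_of_deriv_eq_zero hs' hf' h
    have hline : DifferentiableOn 𝕜 (fun z : 𝕜 => z • b) s := by fun_prop
    have hderiv : EqOn (deriv f) (deriv fun z : 𝕜 => z • b) s := fun x hx =>
      (hb x hx).trans (deriv_smul_right b x).symm
    obtain ⟨a, ha⟩ := hs.exists_eq_add_of_deriv_eq hs' hf hline hderiv
    exact ⟨a, b, fun x hx => (ha hx).trans (add_comm _ _)⟩
  · rintro ⟨a, b, h⟩ x hx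
    have hderiv : EqOn (deriv f) (fun _ => b) s := fun z hz => by
      rw [EqOn.deriv h hs hz, deriv_const_add, deriv_smul_right]
    rw [hderiv.deriv hs hx, deriv_const]

theorem hasDerivAt_deriv_exp {f : ℝ → ℝ} {x : ℝ} (hf : ∀ᶠ z in 𝓝 x, DifferentiableAt ℝ f z)
    (hf' : DifferentiableAt ℝ (deriv f) x) :
    HasDerivAt (deriv fun z => Real.exp (f z))
      ((deriv (deriv f) x + deriv f x ^ 2) * Real.exp (f x)) x := by
  have hderiv : deriv (fun z => Real.exp (f z)) =ᶠ[𝓝 x] fun z => Real.exp (f z) * deriv f z :=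
    hf.mono fun z hz => deriv_exp hz
  refine HasDerivAt.congr_of_eventuallyEq ?_ hderiv
  exact (hf.self_of_nhds.hasDerivAt.exp.fun_mul hf'.hasDerivAt).congr_deriv (by ring)

theorem hasDerivAt_deriv_exp_neg_half_mul {f : ℝ → ℝ} {x : ℝ}
    (hf : ∀ᶠ z in 𝓝 x, DifferentiableAt ℝ f z) (hf' : DifferentiableAt ℝ (deriv f) x) :
    HasDerivAt (deriv fun z => Real.exp (-(1 / 2) * f z))
      (-(1 / 2) * (deriv (deriv f) x - (1 / 2) * deriv f x ^ 2) * Real.exp (-(1 / 2) * f x)) x := by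
  have hderiv : deriv (fun z => -(1 / 2) * f z) = fun z => -(1 / 2) * deriv f z :=
    deriv_const_mul_field' _
  refine (hasDerivAt_deriv_exp (hf.mono fun z hz => hz.const_mul _)
    (hderiv ▸ hf'.const_mul _)).congr_deriv ?_
  rw [hderiv, deriv_const_mul_field]
  ring

theorem deriv_deriv_eq_half_mul_sq_iff_exists_exp_eq_add_mul {f : ℝ → ℝ} {s : Set ℝ}
    (hs : IsOpen s) (hs' : IsPreconnected s) (hf : DifferentiableOn ℝ f s)
    (hf' : DifferentiableOn ℝ (deriv f) s) :
    (∀ x ∈ s, deriv (deriv f) x = (1 / 2) * deriv f x ^ 2)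
      ↔ ∃ a b : ℝ, ∀ x ∈ s, Real.exp (-(1 / 2) * f x) = a + b * x := by
  set Y : ℝ → ℝ := fun x => Real.exp (-(1 / 2) * f x)
  have hY : DifferentiableOn ℝ Y s := (hf.const_mul _).exp
  have hY' : ∀ x ∈ s, HasDerivAt (deriv Y)
      (-(1 / 2) * (deriv (deriv f) x - (1 / 2) * deriv f x ^ 2) * Y x) x := fun x hx =>
    hasDerivAt_deriv_exp_neg_half_mul (hf.eventually_differentiableAt (hs.mem_nhds hx))
      (hf'.differentiableAt (hs.mem_nhds hx))
  calc (∀ x ∈ s, deriv (deriv f) x = (1 / 2) * deriv f x ^ 2)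
      ↔ ∀ x ∈ s, deriv (deriv Y) x = 0 := forall₂_congr fun x hx => by
        have hYne : Y x ≠ 0 := Real.exp_ne_zero _
        rw [(hY' x hx).deriv, mul_eq_zero_iff_right hYne, mul_eq_zero_iff_left (by norm_num),
          sub_eq_zero]
    _ ↔ ∃ a b : ℝ, ∀ x ∈ s, Y x = a + x • b :=
        deriv_deriv_eq_zero_iff_exists_eq_add_smul hs hs' hY fun x hx =>
          (hY' x hx).differentiableAt.differentiableWithinAt
    _ ↔ ∃ a b : ℝ, ∀ x ∈ s, Y x = a + b * x := by simp only [smul_eq_mul, mul_comm]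

theorem differentiableOn_deriv_log {f : ℝ → ℝ} {s : Set ℝ} (hs : IsOpen s)
    (hf : DifferentiableOn ℝ f s) (hf' : DifferentiableOn ℝ (deriv f) s)
    (hne : ∀ x ∈ s, f x ≠ 0) :
    DifferentiableOn ℝ (deriv fun x => Real.log (f x)) s :=
  (hf'.div hf hne).congr fun x hx => deriv.log (hf.differentiableAt (hs.mem_nhds hx)) (hne x hx)

theorem exp_neg_half_mul_log_eq_iff {x y : ℝ} (hx : 0 < x) :
    Real.exp (-(1 / 2) * Real.log x) = y ↔ 0 < y ∧ x = (y ^ 2)⁻¹ := by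
  constructor
  · rintro rfl
    refine ⟨Real.exp_pos _, ?_⟩
    calc x = Real.exp (Real.log x) := (Real.exp_log hx).symm
      _ = Real.exp (-((2 : ℕ) * (-(1 / 2) * Real.log x))) := by congr 1; push_cast; ring
      _ = (Real.exp (-(1 / 2) * Real.log x) ^ 2)⁻¹ := by rw [Real.exp_neg, Real.exp_nat_mul]
  · rintro ⟨hy, rfl⟩
    calc Real.exp (-(1 / 2) * Real.log (y ^ 2)⁻¹) = Real.exp (Real.log y) := by
          rw [Real.log_inv, Real.log_pow]; congr 1; push_cast; ring
      _ = y := Real.exp_log hy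

theorem alpha_zero_solutions_general {I : Set ℝ} (hIopen : IsOpen I) (hIinterval : I.OrdConnected)
    {E : ℝ → ℝ} (hE : DifferentiableOn ℝ E I) (hE' : DifferentiableOn ℝ (deriv E) I)
    (hEpos : ∀ y ∈ I, 0 < E y) :
    (∀ y ∈ I,
      deriv (deriv (fun z => Real.log (E z))) y
        = (1 / 2) * (deriv (fun z => Real.log (E z)) y) ^ 2)
    ↔ ∃ a b : ℝ, (∀ y ∈ I, 0 < a + b * y) ∧
        ∀ y ∈ I, E y = ((a + b * y) ^ 2)⁻¹ := by
  have hne : ∀ y ∈ I, E y ≠ 0 := fun y hy => (hEpos y hy).ne'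
  rw [deriv_deriv_eq_half_mul_sq_iff_exists_exp_eq_add_mul hIopen hIinterval.isPreconnected
    (hE.log hne) (differentiableOn_deriv_log hIopen hE hE' hne)]
  refine exists₂_congr fun a b => ?_
  rw [← forall₂_and]
  exact forall₂_congr fun y hy => exp_neg_half_mul_log_eq_iff (hEpos y hy)

/-- For a smooth positive function `E` on a nonempty open interval `I`,
the ODE `(log E)'' = ½((log E)')²` (the case `α = 0`) holds on `I` if and only if
`E(y) = (a + b·y)^{-2}` on `I` for some constants `a, b` with `a + b·y > 0` on `I`. -/
theorem alpha_zero_solutions (I : Set ℝ) (hIne : I.Nonempty)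
    (hIopen : IsOpen I) (hIinterval : I.OrdConnected)
    (E : ℝ → ℝ) (hE : ContDiffOn ℝ (⊤ : ℕ∞) E I) (hEpos : ∀ y ∈ I, 0 < E y) :
    (∀ y ∈ I,
      deriv (deriv (fun z => Real.log (E z))) y
        = (1 / 2) * (deriv (fun z => Real.log (E z)) y) ^ 2)
    ↔ ∃ a b : ℝ, (∀ y ∈ I, 0 < a + b * y) ∧
        ∀ y ∈ I, E y = ((a + b * y) ^ 2)⁻¹ := by
  have h := (contDiffOn_infty_iff_deriv_of_isOpen hIopen).1 hE
  exact alpha_zero_solutions_general hIopen hIinterval h.1 (h.2.differentiableOn (by simp)) hEpos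
end

section
/- (Main result 3, classical data.) Let t ∈ ℝ and consider the metric g = y^{-2} dx⊗dx + e^{2t/y} y^{-2} dy⊗dy on the upper half-plane, i.e. E(y) = y^{-2}, G(y) = e^{2t/y} y^{-2}. Then its nonzero Levi-Civita Christoffel symbols are Γ¹₁₂ = Γ¹₂₁ = −1/y, Γ²₁₁ = e^{-2t/y}/y, Γ²₂₂ = −(t + y)/y²; the nonzero Riemann curvature components are R¹₂₂₁ = (y − t)/y³ = −R¹₂₁₂ and R²₁₁₂ = e^{-2t/y}(y − t)/y³ = −R²₁₂₁; and the scalar curvature is R = g^{11}R²₁₂₁ + g^{22}R¹₂₁₂ = 2 e^{-2t/y}(t − y)/y. At t = 0 these reduce to the corresponding data of the Poincaré metric (in particular R = −2). -/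
/-- Coordinate partial derivatives for functions of `y` alone: `∂₁ = 0`, `∂₂ = d/dy`. -/
noncomputable def pd : Fin 2 → (ℝ → ℝ) → ℝ → ℝ := ![fun _ _ => 0, fun f => deriv f]

/-- The metric `g = E(y) dx⊗dx + G(y) dy⊗dy`. -/
noncomputable def gmet (E G : ℝ → ℝ) : Fin 2 → Fin 2 → ℝ → ℝ :=
  ![![E, fun _ => 0], ![fun _ => 0, G]]

/-- The inverse metric. -/
noncomputable def ginv (E G : ℝ → ℝ) : Fin 2 → Fin 2 → ℝ → ℝ :=
  ![![fun y => 1 / E y, fun _ => 0], ![fun _ => 0, fun y => 1 / G y]]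

/-- Christoffel symbols `Γ^i_{jk} = ½ Σ_l g^{il}(∂_j g_{kl} + ∂_k g_{jl} − ∂_l g_{jk})`. -/
noncomputable def chr (E G : ℝ → ℝ) (i j k : Fin 2) : ℝ → ℝ := fun y =>
  (1 / 2) * ∑ l : Fin 2, ginv E G i l y *
    (pd j (gmet E G k l) y + pd k (gmet E G j l) y - pd l (gmet E G j k) y)

/-- Riemann curvature tensor
`R^i_{jkl} = ∂_kΓ^i_{lj} − ∂_lΓ^i_{kj} + Σ_m (Γ^m_{lj}Γ^i_{km} − Γ^m_{kj}Γ^i_{lm})`. -/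
noncomputable def Riem (E G : ℝ → ℝ) (i j k l : Fin 2) : ℝ → ℝ := fun y =>
  pd k (chr E G i l j) y - pd l (chr E G i k j) y +
    ∑ m : Fin 2, (chr E G m l j y * chr E G i k m y - chr E G m k j y * chr E G i l m y)

/-- Scalar curvature `R = g^{ij} R^k_{ikj}`. -/
noncomputable def scal (E G : ℝ → ℝ) : ℝ → ℝ := fun y =>
  ∑ i : Fin 2, ∑ j : Fin 2, ginv E G i j y * ∑ k : Fin 2, Riem E G k i k j y

/-!
For a diagonal metric `E(y) dx² + G(y) dy²` the only Christoffel symbols that can be nonzero are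
`Γ¹₁₂ = Γ¹₂₁ = E'/2E`, `Γ²₁₁ = -E'/2G` and `Γ²₂₂ = G'/2G`. As in every dimension-two geometry the
curvature is then carried by one function, the Gaussian curvature `K`, through
`R¹₂₁₂ = K G`, `R²₁₁₂ = -K E` and `R = 2 K`; for the deformed Poincaré metric
`K = e^{-2t/y} (t - y) / y`.
-/

section DiagonalMetric

variable (E G : ℝ → ℝ)

theorem gmet_comm (i j : Fin 2) : gmet E G i j = gmet E G j i := by
  fin_cases i <;> fin_cases j <;> rfl

theorem chr_comm (i j k : Fin 2) : chr E G i j k = chr E G i k j := by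
  ext y
  simp only [chr, Fin.sum_univ_two, gmet_comm E G j k]
  ring

theorem chr_zero_zero_one : chr E G 0 0 1 = fun y => deriv E y / (2 * E y) := by
  ext y
  calc chr E G 0 0 1 y = 1 / 2 * (1 / E y * deriv E y) := by simp [chr, pd, gmet, ginv]
    _ = deriv E y / (2 * E y) := by ring

theorem chr_one_zero_zero : chr E G 1 0 0 = fun y => -(deriv E y / (2 * G y)) := by
  ext y
  calc chr E G 1 0 0 y = 1 / 2 * (1 / G y * -deriv E y) := by simp [chr, pd, gmet, ginv]
    _ = -(deriv E y / (2 * G y)) := by ring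

theorem chr_one_one_one : chr E G 1 1 1 = fun y => deriv G y / (2 * G y) := by
  ext y
  calc chr E G 1 1 1 y = 1 / 2 * (1 / G y * deriv G y) := by simp [chr, pd, gmet, ginv]
    _ = deriv G y / (2 * G y) := by ring

theorem chr_zero_zero_zero : chr E G 0 0 0 = 0 := by
  ext y
  simp [chr, pd, gmet, ginv]

theorem chr_zero_one_one : chr E G 0 1 1 = 0 := by
  ext y
  simp [chr, pd, gmet, ginv]

theorem chr_one_zero_one : chr E G 1 0 1 = 0 := by
  ext y
  simp [chr, pd, gmet, ginv]

theorem riem_swap (i j k l : Fin 2) (y : ℝ) : Riem E G i j k l y = -Riem E G i j l k y := by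
  simp only [Riem, Fin.sum_univ_two]
  ring

theorem riem_self_right (i j k : Fin 2) (y : ℝ) : Riem E G i j k k y = 0 :=
  self_eq_neg.mp (riem_swap E G i j k k y)

theorem riem_zero_one (i j : Fin 2) (y : ℝ) :
    Riem E G i j 0 1 y = -deriv (chr E G i 0 j) y +
      ∑ m : Fin 2, (chr E G m 1 j y * chr E G i 0 m y - chr E G m 0 j y * chr E G i 1 m y) := by
  simp [Riem, pd]

theorem riem_self_left_zero_one (i : Fin 2) (y : ℝ) : Riem E G i i 0 1 y = 0 := by
  fin_cases i <;>
    simp [riem_zero_one, chr_comm E G _ 1 0, chr_zero_zero_zero, chr_zero_one_one,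
      chr_one_zero_one]

theorem riem_self_left (i k l : Fin 2) (y : ℝ) : Riem E G i i k l y = 0 := by
  fin_cases k <;> fin_cases l
  · exact riem_self_right E G i i 0 y
  · exact riem_self_left_zero_one E G i y
  · exact (riem_swap E G i i 1 0 y).trans (neg_eq_zero.mpr (riem_self_left_zero_one E G i y))
  · exact riem_self_right E G i i 1 y

/-- The Gaussian curvature `K` of the metric `E(y) dx⊗dx + G(y) dy⊗dy`: the Gauss formula
`K = -(E' / √(EG))' / (2√(EG))` with the derivative expanded, so that no square root occurs. -/
noncomputable def gaussianCurvature (y : ℝ) : ℝ :=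
  deriv E y * (deriv E y * G y + E y * deriv G y) / (4 * E y ^ 2 * G y ^ 2) -
    deriv (deriv E) y / (2 * E y * G y)

variable {E G} {y : ℝ}

theorem riem_zero_one_zero_one (hE : DifferentiableAt ℝ E y)
    (hE' : DifferentiableAt ℝ (deriv E) y) (hE0 : E y ≠ 0) (hG0 : G y ≠ 0) :
    Riem E G 0 1 0 1 y = gaussianCurvature E G y * G y := by
  have hderiv : deriv (chr E G 0 0 1) y =
      (deriv (deriv E) y * (2 * E y) - deriv E y * (2 * deriv E y)) / (2 * E y) ^ 2 := by
    rw [chr_zero_zero_one]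
    exact (hE'.hasDerivAt.div (hE.hasDerivAt.const_mul 2) (by simpa using hE0)).deriv
  rw [riem_zero_one, hderiv]
  simp only [Fin.sum_univ_two, chr_comm E G _ 1 0, chr_zero_zero_one,
    chr_one_one_one, chr_zero_zero_zero, chr_zero_one_one, chr_one_zero_one, Pi.zero_apply,
    gaussianCurvature]
  field_simp
  ring

theorem riem_one_zero_zero_one (hE' : DifferentiableAt ℝ (deriv E) y)
    (hG : DifferentiableAt ℝ G y) (hE0 : E y ≠ 0) (hG0 : G y ≠ 0) :
    Riem E G 1 0 0 1 y = -(gaussianCurvature E G y * E y) := by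
  have hderiv : deriv (chr E G 1 0 0) y =
      -((deriv (deriv E) y * (2 * G y) - deriv E y * (2 * deriv G y)) / (2 * G y) ^ 2) := by
    rw [chr_one_zero_zero]
    exact (hE'.hasDerivAt.div (hG.hasDerivAt.const_mul 2) (by simpa using hG0)).neg.deriv
  rw [riem_zero_one, hderiv]
  simp only [Fin.sum_univ_two, chr_comm E G _ 1 0, chr_zero_zero_one,
    chr_one_zero_zero, chr_one_one_one, chr_zero_zero_zero, chr_one_zero_one, Pi.zero_apply,
    gaussianCurvature]
  field_simp
  ring

theorem scal_eq_two_mul_gaussianCurvature (hE : DifferentiableAt ℝ E y)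
    (hE' : DifferentiableAt ℝ (deriv E) y) (hG : DifferentiableAt ℝ G y)
    (hE0 : E y ≠ 0) (hG0 : G y ≠ 0) :
    scal E G y = 2 * gaussianCurvature E G y := by
  have htrace : scal E G y = 1 / E y * Riem E G 1 0 1 0 y + 1 / G y * Riem E G 0 1 0 1 y := by
    simp [scal, ginv, riem_self_left]
  rw [htrace, riem_swap, riem_one_zero_zero_one hE' hG hE0 hG0,
    riem_zero_one_zero_one hE hE' hE0 hG0]
  field_simp
  ring

end DiagonalMetric

section DeformedPoincare

/-- The coefficient `E = y⁻²` of `dx⊗dx` in the deformed Poincaré metric. -/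
noncomputable def poincareE (y : ℝ) : ℝ := (y ^ 2)⁻¹

/-- The coefficient `G = e^{2t/y} y⁻²` of `dy⊗dy` in the deformed Poincaré metric with
parameter `t`. -/
noncomputable def deformedG (t y : ℝ) : ℝ := Real.exp (2 * t / y) * (y ^ 2)⁻¹

variable {y : ℝ}

theorem poincareE_ne_zero (hy : y ≠ 0) : poincareE y ≠ 0 :=
  inv_ne_zero (pow_ne_zero 2 hy)

theorem deformedG_ne_zero (t : ℝ) (hy : y ≠ 0) : deformedG t y ≠ 0 :=
  mul_ne_zero (Real.exp_ne_zero _) (poincareE_ne_zero hy)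

theorem hasDerivAt_poincareE (hy : y ≠ 0) : HasDerivAt poincareE (-2 / y ^ 3) y := by
  refine ((hasDerivAt_pow 2 y).inv (pow_ne_zero 2 hy)).congr_deriv ?_
  field_simp
  ring

theorem hasDerivAt_deriv_poincareE (hy : y ≠ 0) :
    HasDerivAt (deriv poincareE) (6 / y ^ 4) y := by
  have hpow : HasDerivAt (fun z : ℝ => -2 / z ^ 3) (6 / y ^ 4) y := by
    refine ((hasDerivAt_const y (-2)).div (hasDerivAt_pow 3 y) (pow_ne_zero 3 hy)).congr_deriv ?_
    field_simp
    ring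
  refine hpow.congr_of_eventuallyEq ?_
  filter_upwards [eventually_ne_nhds hy] with z hz using (hasDerivAt_poincareE hz).deriv

theorem hasDerivAt_deformedG (t : ℝ) (hy : y ≠ 0) :
    HasDerivAt (deformedG t) (-2 * (t + y) / y ^ 2 * deformedG t y) y := by
  have hexp : HasDerivAt (fun z => Real.exp (2 * t / z))
      (Real.exp (2 * t / y) * (-(2 * t) / y ^ 2)) y := by
    refine ((hasDerivAt_const y (2 * t)).div (hasDerivAt_id y) hy).exp.congr_deriv ?_
    simp
  refine (hexp.mul (hasDerivAt_poincareE hy)).congr_deriv ?_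
  simp only [deformedG, poincareE]
  field_simp
  ring

theorem chr_deformed_zero_zero_one (t : ℝ) (hy : y ≠ 0) :
    chr poincareE (deformedG t) 0 0 1 y = -1 / y := by
  simp only [chr_zero_zero_one, (hasDerivAt_poincareE hy).deriv, poincareE]
  field_simp

theorem chr_deformed_one_zero_zero (t : ℝ) (hy : y ≠ 0) :
    chr poincareE (deformedG t) 1 0 0 y = Real.exp (-(2 * t) / y) / y := by
  simp only [chr_one_zero_zero, (hasDerivAt_poincareE hy).deriv, deformedG, neg_div, Real.exp_neg]
  field_simp

theorem chr_deformed_one_one_one (t : ℝ) (hy : y ≠ 0) :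
    chr poincareE (deformedG t) 1 1 1 y = -(t + y) / y ^ 2 := by
  have hG0 := deformedG_ne_zero t hy
  simp only [chr_one_one_one, (hasDerivAt_deformedG t hy).deriv]
  field_simp

theorem gaussianCurvature_deformed (t : ℝ) (hy : y ≠ 0) :
    gaussianCurvature poincareE (deformedG t) y = Real.exp (-(2 * t) / y) * (t - y) / y := by
  simp only [gaussianCurvature, (hasDerivAt_poincareE hy).deriv,
    (hasDerivAt_deriv_poincareE hy).deriv, (hasDerivAt_deformedG t hy).deriv, poincareE,
    deformedG, neg_div, Real.exp_neg]
  field_simp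
  ring

theorem riem_deformed_zero_one_zero_one (t : ℝ) (hy : y ≠ 0) :
    Riem poincareE (deformedG t) 0 1 0 1 y = -((y - t) / y ^ 3) := by
  rw [riem_zero_one_zero_one (hasDerivAt_poincareE hy).differentiableAt
      (hasDerivAt_deriv_poincareE hy).differentiableAt (poincareE_ne_zero hy)
      (deformedG_ne_zero t hy), gaussianCurvature_deformed t hy, deformedG, neg_div, Real.exp_neg]
  field_simp
  ring

theorem riem_deformed_one_zero_zero_one (t : ℝ) (hy : y ≠ 0) :
    Riem poincareE (deformedG t) 1 0 0 1 y = Real.exp (-(2 * t) / y) * (y - t) / y ^ 3 := by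
  rw [riem_one_zero_zero_one (hasDerivAt_deriv_poincareE hy).differentiableAt
      (hasDerivAt_deformedG t hy).differentiableAt (poincareE_ne_zero hy)
      (deformedG_ne_zero t hy), gaussianCurvature_deformed t hy, poincareE]
  field_simp
  ring

theorem scal_deformed (t : ℝ) (hy : y ≠ 0) :
    scal poincareE (deformedG t) y = 2 * Real.exp (-(2 * t) / y) * (t - y) / y := by
  rw [scal_eq_two_mul_gaussianCurvature (hasDerivAt_poincareE hy).differentiableAt
      (hasDerivAt_deriv_poincareE hy).differentiableAt
      (hasDerivAt_deformedG t hy).differentiableAt (poincareE_ne_zero hy)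
      (deformedG_ne_zero t hy), gaussianCurvature_deformed t hy]
  ring

end DeformedPoincare

theorem eq_or_eq_of_notMem_curvature_indices :
    ∀ i j k l : Fin 2,
      (i, j, k, l) ∉ ({(0, 1, 1, 0), (0, 1, 0, 1), (1, 0, 0, 1), (1, 0, 1, 0)} :
        Set (Fin 2 × Fin 2 × Fin 2 × Fin 2)) → i = j ∨ k = l := by
  simp only [Set.mem_insert_iff, Set.mem_singleton_iff]
  decide

theorem t_deformed_poincare_classical_data_general (t : ℝ) :
    let E : ℝ → ℝ := fun y => (y ^ 2)⁻¹
    let G : ℝ → ℝ := fun y => Real.exp (2 * t / y) * (y ^ 2)⁻¹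
    ∀ y : ℝ, y ≠ 0 →
      (chr E G 0 0 1 y = -1 / y ∧
       chr E G 0 1 0 y = -1 / y ∧
       chr E G 1 0 0 y = Real.exp (-(2 * t) / y) / y ∧
       chr E G 1 1 1 y = -(t + y) / y ^ 2 ∧
       chr E G 0 0 0 y = 0 ∧ chr E G 0 1 1 y = 0 ∧
       chr E G 1 0 1 y = 0 ∧ chr E G 1 1 0 y = 0) ∧
      (Riem E G 0 1 1 0 y = (y - t) / y ^ 3 ∧
       Riem E G 0 1 0 1 y = -((y - t) / y ^ 3) ∧
       Riem E G 1 0 0 1 y = Real.exp (-(2 * t) / y) * (y - t) / y ^ 3 ∧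
       Riem E G 1 0 1 0 y = -(Real.exp (-(2 * t) / y) * (y - t) / y ^ 3) ∧
       (∀ i j k l : Fin 2,
         (i, j, k, l) ∉ ({(0, 1, 1, 0), (0, 1, 0, 1), (1, 0, 0, 1), (1, 0, 1, 0)} :
             Set (Fin 2 × Fin 2 × Fin 2 × Fin 2)) →
         Riem E G i j k l y = 0)) ∧
      scal E G y = 2 * Real.exp (-(2 * t) / y) * (t - y) / y ∧
      (t = 0 → scal E G y = -2) := by
  intro E G y hy
  have hswap : ∀ i j, Riem E G i j 1 0 y = -Riem E G i j 0 1 y := fun i j =>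
    riem_swap E G i j 1 0 y
  have hscal : scal E G y = 2 * Real.exp (-(2 * t) / y) * (t - y) / y := scal_deformed t hy
  have hR0 : Riem E G 0 1 0 1 y = -((y - t) / y ^ 3) := riem_deformed_zero_one_zero_one t hy
  have hR1 : Riem E G 1 0 0 1 y = Real.exp (-(2 * t) / y) * (y - t) / y ^ 3 :=
    riem_deformed_one_zero_zero_one t hy
  have hchr : chr E G 0 0 1 y = -1 / y := chr_deformed_zero_zero_one t hy
  refine ⟨⟨hchr, by rw [chr_comm, hchr], chr_deformed_one_zero_zero t hy,
    chr_deformed_one_one_one t hy, congrFun (chr_zero_zero_zero E G) y,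
    congrFun (chr_zero_one_one E G) y, congrFun (chr_one_zero_one E G) y,
    by rw [chr_comm, chr_one_zero_one, Pi.zero_apply]⟩,
    ⟨by rw [hswap, hR0, neg_neg], hR0, hR1, by rw [hswap, hR1], fun i j k l hijkl => ?_⟩,
    hscal, fun ht => ?_⟩
  · rcases eq_or_eq_of_notMem_curvature_indices i j k l hijkl with rfl | rfl
    · exact riem_self_left E G i k l y
    · exact riem_self_right E G i j k y
  · rw [hscal, ht]
    simp only [mul_zero, neg_zero, zero_div, Real.exp_zero, zero_sub]
    field_simp

/-- **Main result 3, classical data.** For the `t`-deformed Poincaré metric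
`g = y⁻²dx⊗dx + e^{2t/y}y⁻²dy⊗dy` on the upper half-plane, the nonzero Christoffel symbols
are `Γ¹₁₂ = Γ¹₂₁ = −1/y`, `Γ²₁₁ = e^{−2t/y}/y`, `Γ²₂₂ = −(t+y)/y²`; the nonzero curvature
components are `R¹₂₂₁ = (y−t)/y³ = −R¹₂₁₂`, `R²₁₁₂ = e^{−2t/y}(y−t)/y³ = −R²₁₂₁`; and the
scalar curvature is `R = 2e^{−2t/y}(t−y)/y`, which at `t = 0` reduces to the Poincaré
value `−2`. -/
theorem t_deformed_poincare_classical_data (t : ℝ) :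
    let E : ℝ → ℝ := fun y => (y ^ 2)⁻¹
    let G : ℝ → ℝ := fun y => Real.exp (2 * t / y) * (y ^ 2)⁻¹
    ∀ y : ℝ, 0 < y →
      (chr E G 0 0 1 y = -1 / y ∧
       chr E G 0 1 0 y = -1 / y ∧
       chr E G 1 0 0 y = Real.exp (-(2 * t) / y) / y ∧
       chr E G 1 1 1 y = -(t + y) / y ^ 2 ∧
       chr E G 0 0 0 y = 0 ∧ chr E G 0 1 1 y = 0 ∧
       chr E G 1 0 1 y = 0 ∧ chr E G 1 1 0 y = 0) ∧
      (Riem E G 0 1 1 0 y = (y - t) / y ^ 3 ∧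
       Riem E G 0 1 0 1 y = -((y - t) / y ^ 3) ∧
       Riem E G 1 0 0 1 y = Real.exp (-(2 * t) / y) * (y - t) / y ^ 3 ∧
       Riem E G 1 0 1 0 y = -(Real.exp (-(2 * t) / y) * (y - t) / y ^ 3) ∧
       (∀ i j k l : Fin 2,
         (i, j, k, l) ∉ ({(0, 1, 1, 0), (0, 1, 0, 1), (1, 0, 0, 1), (1, 0, 1, 0)} :
             Set (Fin 2 × Fin 2 × Fin 2 × Fin 2)) →
         Riem E G i j k l y = 0)) ∧
      scal E G y = 2 * Real.exp (-(2 * t) / y) * (t - y) / y ∧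
      (t = 0 → scal E G y = -2) := by
  exact fun y hy => t_deformed_poincare_classical_data_general t y hy.ne'
end

section
/- (Main result 3, quantum Levi-Civita condition.) Let t ∈ ℝ, let 𝓡(y) := e^{-t/y}(y − t)·y^{-3} (the generalized Ricci coefficient of the t-deformed Poincaré metric), and let Γ¹₂₁(y) = −1/y, Γ²₂₂(y) = −(t + y)/y² be Christoffel symbols of that metric. Then for all y > 0: 𝓡'(y) − 𝓡(y)·(Γ¹₂₁(y) + Γ²₂₂(y)) = −t·e^{-t/y}(2t − 3y)·y^{-5}. In particular, 𝓡'(y) = −e^{-t/y}(t² − 4ty + 2y²)·y^{-5}, and the left-hand side vanishes for all y > 0 if and only if t = 0. (Hence ∇𝓡 ≠ 0 for t ≠ 0, so the semiquantized connection ∇_Q is not a quantum Levi-Civita connection for the quantum metric g₁ unless t = 0, though its contraction by the wedge product — the cotorsion — vanishes, making ∇_Q a weak quantum Levi-Civita connection.) -/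
/-- The coefficient `𝓡(y)` of the generalized Ricci form `𝓡 dx ∧ dy` of the `t`-deformed
Poincaré metric `y⁻² dx ⊗ dx + e^{2t/y} y⁻² dy ⊗ dy`, as a function of the height `y` alone. -/
noncomputable def deformedRicci (t y : ℝ) : ℝ :=
  Real.exp (-t / y) * (y - t) / y ^ 3

/-- The Christoffel symbol `Γ¹₂₁` of the `t`-deformed Poincaré metric at height `y`; index `1`
stands for `x` and index `2` for `y`. It does not depend on `t`. -/
noncomputable def deformedChristoffel121 (y : ℝ) : ℝ :=
  -1 / y

/-- The Christoffel symbol `Γ²₂₂` of the `t`-deformed Poincaré metric at height `y`, with the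
index convention of `deformedChristoffel121`. -/
noncomputable def deformedChristoffel222 (t y : ℝ) : ℝ :=
  -(t + y) / y ^ 2

/-- The coefficient of `dy ⊗ dx ∧ dy` in the covariant derivative `∇𝓡`. Its vanishing is the
condition for the semiquantized connection to be a quantum Levi-Civita connection. -/
noncomputable def deformedRicciCovDeriv (t y : ℝ) : ℝ :=
  deriv (deformedRicci t) y -
    deformedRicci t y * (deformedChristoffel121 y + deformedChristoffel222 t y)

theorem hasDerivAt_exp_const_div (c : ℝ) {y : ℝ} (hy : y ≠ 0) :
    HasDerivAt (fun z => Real.exp (c / z)) (Real.exp (c / y) * (-c / y ^ 2)) y := by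
  have h_div : HasDerivAt (fun z => c / z) (-c / y ^ 2) y := by
    simpa using (hasDerivAt_const y c).fun_div (hasDerivAt_id' y) hy
  exact h_div.exp

theorem hasDerivAt_deformedRicci (t : ℝ) {y : ℝ} (hy : y ≠ 0) :
    HasDerivAt (deformedRicci t)
      (-(Real.exp (-t / y) * (t ^ 2 - 4 * t * y + 2 * y ^ 2) / y ^ 5)) y := by
  have h_quot := ((hasDerivAt_exp_const_div (-t) hy).fun_mul
    ((hasDerivAt_id' y).sub_const t)).fun_div (hasDerivAt_pow 3 y) (pow_ne_zero 3 hy)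
  refine h_quot.congr_deriv ?_
  field_simp
  ring

theorem deformedRicciCovDeriv_eq (t : ℝ) {y : ℝ} (hy : y ≠ 0) :
    deformedRicciCovDeriv t y = -(t * Real.exp (-t / y) * (2 * t - 3 * y) / y ^ 5) := by
  rw [deformedRicciCovDeriv, (hasDerivAt_deformedRicci t hy).deriv, deformedRicci,
    deformedChristoffel121, deformedChristoffel222]
  field_simp
  ring

theorem deformedRicciCovDeriv_eq_zero_iff (t : ℝ) {y : ℝ} (hy : y ≠ 0) :
    deformedRicciCovDeriv t y = 0 ↔ t = 0 ∨ 2 * t = 3 * y := by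
  simp only [deformedRicciCovDeriv_eq t hy, neg_eq_zero, div_eq_zero_iff, mul_eq_zero,
    Real.exp_ne_zero, pow_ne_zero 5 hy, or_false, sub_eq_zero]

theorem forall_mem_deformedRicciCovDeriv_eq_zero_iff (t : ℝ) {S : Set ℝ} (hS : S.Nontrivial)
    (hS₀ : 0 ∉ S) : (∀ y ∈ S, deformedRicciCovDeriv t y = 0) ↔ t = 0 := by
  have zero_iff {y : ℝ} (hy : y ∈ S) : deformedRicciCovDeriv t y = 0 ↔ t = 0 ∨ 2 * t = 3 * y :=
    deformedRicciCovDeriv_eq_zero_iff t (ne_of_mem_of_not_mem hy hS₀)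
  refine ⟨fun h => ?_, fun ht y hy => (zero_iff hy).2 (Or.inl ht)⟩
  obtain ⟨a, ha, b, hb, hab⟩ := hS
  by_contra ht
  have ha_eq : 2 * t = 3 * a := ((zero_iff ha).1 (h a ha)).resolve_left ht
  have hb_eq : 2 * t = 3 * b := ((zero_iff hb).1 (h b hb)).resolve_left ht
  exact hab (by linarith)

theorem t_deformed_quantum_levi_civita_condition_general (t : ℝ) {S : Set ℝ}
    (hS : S.Nontrivial) (hS₀ : 0 ∉ S) :
    (∀ y : ℝ, y ≠ 0 →
      deformedRicciCovDeriv t y = -(t * Real.exp (-t / y) * (2 * t - 3 * y) / y ^ 5) ∧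
      deriv (deformedRicci t) y =
        -(Real.exp (-t / y) * (t ^ 2 - 4 * t * y + 2 * y ^ 2) / y ^ 5)) ∧
    ((∀ y ∈ S, deformedRicciCovDeriv t y = 0) ↔ t = 0) :=
  ⟨fun _ hy => ⟨deformedRicciCovDeriv_eq t hy, (hasDerivAt_deformedRicci t hy).deriv⟩,
    forall_mem_deformedRicciCovDeriv_eq_zero_iff t hS hS₀⟩

/-- **Main result 3, quantum Levi-Civita condition.** For the `t`-deformed
Poincaré metric, with generalized Ricci coefficient `𝓡(y) = e^{−t/y}(y−t)/y³` and
Christoffel symbols `Γ¹₂₁ = −1/y`, `Γ²₂₂ = −(t+y)/y²`, one has for all `y > 0`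
`𝓡' − 𝓡(Γ¹₂₁ + Γ²₂₂) = −t e^{−t/y}(2t−3y)/y⁵` and
`𝓡' = −e^{−t/y}(t² − 4ty + 2y²)/y⁵`; moreover the left-hand side vanishes for all
`y > 0` if and only if `t = 0`.  (Hence `∇𝓡 ≠ 0` for `t ≠ 0`, so `∇_Q` is not a quantum
Levi-Civita connection for `g₁` unless `t = 0`.) -/
theorem t_deformed_quantum_levi_civita_condition (t : ℝ) :
    let Ric : ℝ → ℝ := fun y => Real.exp (-t / y) * (y - t) / y ^ 3
    let Γ121 : ℝ → ℝ := fun y => -1 / y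
    let Γ222 : ℝ → ℝ := fun y => -(t + y) / y ^ 2
    (∀ y : ℝ, 0 < y →
      deriv Ric y - Ric y * (Γ121 y + Γ222 y)
        = -(t * Real.exp (-t / y) * (2 * t - 3 * y) / y ^ 5) ∧
      deriv Ric y = -(Real.exp (-t / y) * (t ^ 2 - 4 * t * y + 2 * y ^ 2) / y ^ 5)) ∧
    ((∀ y : ℝ, 0 < y → deriv Ric y - Ric y * (Γ121 y + Γ222 y) = 0) ↔ t = 0) := by
  have upper_nontrivial : (Set.Ioi (0 : ℝ)).Nontrivial :=
    Set.nontrivial_of_lt (Set.mem_Ioi.2 one_pos) (Set.mem_Ioi.2 two_pos) one_lt_two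
  have general :=
    t_deformed_quantum_levi_civita_condition_general t upper_nontrivial Set.self_notMem_Ioi
  exact ⟨fun y hy => general.1 y hy.ne', general.2⟩
end
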